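/- Let n be an even positive integer and k a positive integer with gcd(k, n) = 1, and let F : F_{2^n} → F_{2^n} be the Kasami function F(x) = x^{2^{2k} - 2^k + 1}. Then the map x ↦ F(x) + F(x + 1) is 2-to-1 on F_{2^n}: every b ∈ F_{2^n} has either 0 or exactly 2 preimages under this map. -/

import Mathlib

/-!
Let `σ` be the `k`-th power of Frobenius; all that matters is that it fixes only `0` and `1`.
Since `F x = σ (σ x) * x / σ x`, the derivative `D x = F x + F (x + 1)` satisfies
`(D x + 1) * σ (x ^ 2 + x) = u * σ u` with `u = σ x + x`. So `D x = 1` forces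
`u = 0`, that is, `x = 0` or `x = 1`, where indeed `D x = 1`. For any other value of `D x`, put
`d = (D x + 1)⁻¹`, so that `σ (x ^ 2 + x) = d * (u * σ u)`; adding its image under `σ` makes both
sides divisible by `σ u` and leaves the equation `σ d * σ (σ u) + σ u + d * u = 1`, affine in `u`.

Suppose `x` and `y` belong to the same value and yield `u ≠ v`. The Wronskian
`w = d * (u * σ v + σ u * v)` satisfies `σ w + w = σ (u + v) = σ (σ (x + y)) + σ (x + y)`, so that
`w` and `σ (x + y)` differ by `0` or `1`, and hence `w ^ 2 = d * ((u + v) * σ (u + v))`.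
With `r = u / (u + v)` this says `w * (r + σ r) = 1`, and `w * r` is a root of
`X ^ 2 + X = σ x ^ 2 + σ x`, that is, `σ x` or `σ x + 1`. Therefore
`σ w * σ r + w * r = σ u = (σ w + w) * σ r`, which gives `w * (r + σ r) = 0`, a contradiction.
So `u = v`, whence `x ^ 2 + x = y ^ 2 + y`.
-/

/-- The Kasami function attached to an endomorphism `σ`, which stands for `x ↦ x ^ 2 ^ k`.
At `x = 0` the division `0 / 0 = 0` gives the intended value. -/
def kasami {F : Type*} [Field F] (σ : F →+* F) (x : F) : F :=
  σ (σ x) * x / σ x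

/-- The derivative of the Kasami function in the direction `1`; in characteristic two the
difference `kasami σ (x + 1) - kasami σ x` is a sum. -/
def kasamiDerivative {F : Type*} [Field F] (σ : F →+* F) (x : F) : F :=
  kasami σ x + kasami σ (x + 1)

/-- The Wronskian (Casoratian) of `u` and `v` with respect to `σ`, scaled by `d`, in
characteristic two. It compares two solutions `u` and `v` of the affine equation
`σ d * σ (σ u) + σ u + d * u = 1`. -/
def twistedWronskian {R : Type*} [CommRing R] (σ : R →+* R) (d u v : R) : R :=
  d * (u * σ v + σ u * v)

theorem pow_pow_gcd_eq_self {M : Type*} [Monoid M] {a : M} {p m n : ℕ}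
    (hm : a ^ p ^ m = a) (hn : a ^ p ^ n = a) : a ^ p ^ m.gcd n = a := by
  have isPeriodicPt_iff (j : ℕ) : Function.IsPeriodicPt (· ^ p) j a ↔ a ^ p ^ j = a := by
    rw [Function.IsPeriodicPt, Function.IsFixedPt, pow_iterate]
  rw [← isPeriodicPt_iff] at hm hn ⊢
  exact hm.gcd hn

theorem eq_zero_or_one_of_pow_two_pow_eq_self {F : Type*} [Field F] [Fintype F] {k n : ℕ}
    (hcard : Fintype.card F = 2 ^ n) (hkn : k.gcd n = 1) {a : F} (ha : a ^ 2 ^ k = a) :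
    a = 0 ∨ a = 1 := by
  have hn : a ^ 2 ^ n = a := hcard ▸ FiniteField.pow_card a
  have hsq := pow_pow_gcd_eq_self ha hn
  rw [hkn, pow_one, sq] at hsq
  exact IsIdempotentElem.iff_eq_zero_or_one.1 hsq

theorem encard_fiber_eq_zero_or_two {α β : Type*} {f : α → β} {τ : α → α} (hτ : ∀ x, τ x ≠ x)
    (hf : ∀ x y, f x = f y ↔ x = y ∨ x = τ y) (b : β) :
    {x | f x = b}.encard = 0 ∨ {x | f x = b}.encard = 2 := by
  rcases Set.eq_empty_or_nonempty {x | f x = b} with hempty | ⟨y, rfl⟩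
  · exact .inl (Set.encard_eq_zero.2 hempty)
  · have hfiber : {x | f x = f y} = {y, τ y} := Set.ext fun x => hf x y
    exact .inr (hfiber ▸ Set.encard_pair (hτ y).symm)

theorem sq_add_self_eq_sq_add_self_iff {R : Type*} [CommRing R] [NoZeroDivisors R] [CharP R 2]
    {a b : R} : a ^ 2 + a = b ^ 2 + b ↔ a = b ∨ a = b + 1 := by
  have hfactor : a ^ 2 + a - (b ^ 2 + b) = (a - b) * (a - (b + 1)) := by grind
  rw [← sub_eq_zero, hfactor, mul_eq_zero, sub_eq_zero, sub_eq_zero]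

section Wronskian

variable {R : Type*} [CommRing R] [CharP R 2] {σ : R →+* R} {d u v x y : R}

theorem affine_eq_of_map_sq_add_self_eq [NoZeroDivisors R] (hσu : σ u ≠ 0) (hu : σ x + x = u)
    (hx : σ (x ^ 2 + x) = d * (u * σ u)) : σ d * σ (σ u) + σ u + d * u = 1 := by
  apply mul_left_cancel₀ hσu
  have htrace : σ (σ (x ^ 2 + x)) + σ (x ^ 2 + x) = σ u ^ 2 + σ u := by
    simp only [← hu, map_add, map_pow]
    grind
  rw [hx, map_mul, map_mul] at htrace
  grind

theorem map_twistedWronskian_add_self (hu : σ d * σ (σ u) + σ u + d * u = 1)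
    (hv : σ d * σ (σ v) + σ v + d * v = 1) :
    σ (twistedWronskian σ d u v) + twistedWronskian σ d u v = σ (u + v) := by
  simp only [twistedWronskian, map_add, map_mul]
  grind

theorem twistedWronskian_sq (hfix : ∀ a, σ a = a → a = 0 ∨ a = 1)
    (hu : σ x + x = u) (hx : σ (x ^ 2 + x) = d * (u * σ u))
    (hv : σ y + y = v) (hy : σ (y ^ 2 + y) = d * (v * σ v))
    (hw : σ (twistedWronskian σ d u v) + twistedWronskian σ d u v = σ (u + v)) :
    twistedWronskian σ d u v ^ 2 = d * ((u + v) * σ (u + v)) := by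
  have hdiff : σ (x + y) + twistedWronskian σ d u v = 0 ∨
      σ (x + y) + twistedWronskian σ d u v = 1 := by
    apply hfix
    simp only [← hu, ← hv, map_add] at hw ⊢
    grind
  have hsq : σ (x + y) ^ 2 + σ (x + y) =
      twistedWronskian σ d u v ^ 2 + twistedWronskian σ d u v := by
    grind
  have hexpand : d * ((u + v) * σ (u + v)) =
      d * (u * σ u) + d * (v * σ v) + twistedWronskian σ d u v := by
    rw [twistedWronskian, map_add]
    ring
  rw [hexpand, ← hx, ← hy]
  simp only [map_add, map_pow] at hsq ⊢
  grind

end Wronskian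

section Field

variable {F : Type*} [Field F] {σ : F →+* F}

theorem kasami_mul_map (σ : F →+* F) (x : F) : kasami σ x * σ x = σ (σ x) * x := by
  rcases eq_or_ne x 0 with rfl | hx
  · simp
  · exact div_mul_cancel₀ _ ((map_ne_zero σ).2 hx)

theorem kasami_iterateFrobenius (p : ℕ) [ExpChar F p] (k : ℕ) (x : F) :
    kasami (iterateFrobenius F p k) x = x ^ (p ^ (2 * k) - p ^ k + 1) := by
  rcases eq_or_ne x 0 with rfl | hx
  · simp [kasami]
  · have hle : p ^ k ≤ p ^ (2 * k) := Nat.pow_le_pow_right (expChar_pos F p) (by lia)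
    simp only [kasami, iterateFrobenius_def]
    rw [div_eq_iff (pow_ne_zero _ hx), ← pow_mul, ← pow_add p, ← two_mul, ← pow_succ, ← pow_add]
    congr 1
    lia

variable [CharP F 2] {d u v x y : F}

theorem twistedWronskian_mul_div_add_map_div (hd : d ≠ 0) (huv : u ≠ v)
    (hsq : twistedWronskian σ d u v ^ 2 = d * ((u + v) * σ (u + v))) :
    twistedWronskian σ d u v * (u / (u + v) + σ (u / (u + v))) = 1 := by
  have hadd : u + v ≠ 0 := mt CharTwo.add_eq_zero.1 huv
  have hσadd : σ (u + v) ≠ 0 := (map_ne_zero σ).2 hadd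
  have hw : twistedWronskian σ d u v ≠ 0 := by
    rw [← sq_eq_zero_iff.ne, hsq]
    exact mul_ne_zero hd (mul_ne_zero hadd hσadd)
  apply mul_left_cancel₀ hw
  rw [← mul_assoc, ← sq, hsq, map_div₀, mul_one]
  field_simp
  rw [twistedWronskian, map_add]
  grind

theorem eq_of_map_sq_add_self_eq (hfix : ∀ a, σ a = a → a = 0 ∨ a = 1) (hd : d ≠ 0)
    (hu : σ x + x = u) (hu₀ : u ≠ 0) (hx : σ (x ^ 2 + x) = d * (u * σ u))
    (hv : σ y + y = v) (hv₀ : v ≠ 0) (hy : σ (y ^ 2 + y) = d * (v * σ v)) : u = v := by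
  by_contra huv
  have hw : σ (twistedWronskian σ d u v) + twistedWronskian σ d u v = σ (u + v) :=
    map_twistedWronskian_add_self
      (affine_eq_of_map_sq_add_self_eq ((map_ne_zero σ).2 hu₀) hu hx)
      (affine_eq_of_map_sq_add_self_eq ((map_ne_zero σ).2 hv₀) hv hy)
  have hsq := twistedWronskian_sq hfix hu hx hv hy hw
  have hone := twistedWronskian_mul_div_add_map_div hd huv hsq
  have hur : (u + v) * (u / (u + v)) = u :=
    mul_div_cancel₀ u (mt CharTwo.add_eq_zero.1 huv)
  generalize twistedWronskian σ d u v = w at hw hsq hone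
  generalize u / (u + v) = r at hone hur
  have hσur : σ (u + v) * σ r = σ u := by rw [← map_mul, hur]
  have hroot : (w * r) ^ 2 + w * r = σ x ^ 2 + σ x := by
    calc (w * r) ^ 2 + w * r = w ^ 2 * (r * σ r) := by grind
      _ = d * (((u + v) * r) * (σ (u + v) * σ r)) := by rw [hsq]; ring
      _ = σ x ^ 2 + σ x := by rw [hur, hσur, ← hx, map_add, map_pow]
  have htrace : σ (w * r) + w * r = σ u := by
    rw [← hu]
    rcases sq_add_self_eq_sq_add_self_iff.1 hroot with h | h
    · rw [h, map_add]
    · rw [h, map_add, map_add, map_one]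
      grind
  have hzero : w * (r + σ r) = 0 := by
    rw [← hσur, ← hw, map_mul] at htrace
    grind
  exact one_ne_zero (hone.symm.trans hzero)

theorem kasamiDerivative_add_one (σ : F →+* F) (x : F) :
    kasamiDerivative σ (x + 1) = kasamiDerivative σ x := by
  rw [kasamiDerivative, kasamiDerivative, CharTwo.add_cancel_right, add_comm]

theorem kasamiDerivative_add_one_mul (σ : F →+* F) (x : F) :
    (kasamiDerivative σ x + 1) * σ (x ^ 2 + x) = (σ x + x) * σ (σ x + x) := by
  have hx := kasami_mul_map σ x
  have hx₁ := kasami_mul_map σ (x + 1)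
  simp only [kasamiDerivative, map_add, map_one, map_pow] at hx hx₁ ⊢
  grind

theorem kasamiDerivative_eq_one_iff (hfix : ∀ a, σ a = a → a = 0 ∨ a = 1) :
    kasamiDerivative σ x = 1 ↔ x = 0 ∨ x = 1 := by
  refine ⟨fun h => hfix x ?_, ?_⟩
  · have hmul := kasamiDerivative_add_one_mul σ x
    rw [h, CharTwo.add_self_eq_zero, zero_mul, eq_comm, mul_eq_zero, map_eq_zero, or_self] at hmul
    exact CharTwo.add_eq_zero.1 hmul
  · rintro (rfl | rfl) <;> simp [kasamiDerivative, kasami, CharTwo.add_self_eq_zero]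

theorem kasamiDerivative_eq_iff (hfix : ∀ a, σ a = a → a = 0 ∨ a = 1) :
    kasamiDerivative σ x = kasamiDerivative σ y ↔ x = y ∨ x = y + 1 := by
  constructor
  · intro hxy
    by_cases hy₁ : kasamiDerivative σ y = 1
    · have hx := (kasamiDerivative_eq_one_iff hfix).1 (hxy.trans hy₁)
      have hy := (kasamiDerivative_eq_one_iff hfix).1 hy₁
      grind
    have hc : kasamiDerivative σ y + 1 ≠ 0 := mt CharTwo.add_eq_zero.1 hy₁
    have hparam {z : F} (hz : kasamiDerivative σ z = kasamiDerivative σ y) :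
        σ (z ^ 2 + z) = (kasamiDerivative σ y + 1)⁻¹ * ((σ z + z) * σ (σ z + z)) := by
      rw [eq_inv_mul_iff_mul_eq₀ hc, ← hz, kasamiDerivative_add_one_mul]
    have hne {z : F} (hz : kasamiDerivative σ z = kasamiDerivative σ y) : σ z + z ≠ 0 :=
      fun h => hy₁ <| hz ▸
        (kasamiDerivative_eq_one_iff hfix).2 (hfix z (CharTwo.add_eq_zero.1 h))
    have huv : σ x + x = σ y + y := eq_of_map_sq_add_self_eq hfix (inv_ne_zero hc)
      rfl (hne hxy) (hparam hxy) rfl (hne rfl) (hparam rfl)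
    apply sq_add_self_eq_sq_add_self_iff.1
    apply σ.injective
    rw [hparam hxy, hparam rfl, huv]
  · rintro (rfl | rfl)
    · rfl
    · exact kasamiDerivative_add_one σ y

end Field

theorem kasami_derivative_two_to_one_general {F : Type*} [Field F] [CharP F 2] (k : ℕ)
    (hfix : ∀ a : F, a ^ 2 ^ k = a → a = 0 ∨ a = 1) (b : F) :
    {x : F | x ^ (2 ^ (2 * k) - 2 ^ k + 1) +
      (x + 1) ^ (2 ^ (2 * k) - 2 ^ k + 1) = b}.encard = 0 ∨
    {x : F | x ^ (2 ^ (2 * k) - 2 ^ k + 1) +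
      (x + 1) ^ (2 ^ (2 * k) - 2 ^ k + 1) = b}.encard = 2 := by
  simp only [← kasami_iterateFrobenius]
  exact encard_fiber_eq_zero_or_two (τ := (· + 1)) (fun x => by simp)
    (fun _ _ => kasamiDerivative_eq_iff (σ := iterateFrobenius F 2 k) hfix) b

/-- For `n` even, `gcd(k,n) = 1`, and the Kasami function
`F(x) = x^(2^(2k)-2^k+1)` on `F_{2^n}`, the map `x ↦ F(x) + F(x+1)` is 2-to-1:
every `b` has either 0 or exactly 2 preimages. -/
theorem kasami_derivative_two_to_one (n k : ℕ) (hn : 0 < n) (hneven : 2 ∣ n)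
    (hk : 0 < k) (hgcd : Nat.gcd k n = 1)
    (F : Type*) [Field F] [Fintype F] (hcard : Fintype.card F = 2 ^ n)
    (b : F) :
    {x : F | x ^ (2 ^ (2 * k) - 2 ^ k + 1) + (x + 1) ^ (2 ^ (2 * k) - 2 ^ k + 1) = b}.ncard = 0 ∨
    {x : F | x ^ (2 ^ (2 * k) - 2 ^ k + 1) + (x + 1) ^ (2 ^ (2 * k) - 2 ^ k + 1) = b}.ncard = 2 := by
  have : CharP F 2 := charP_of_card_eq_prime_pow hcard
  have hfix (a : F) := eq_zero_or_one_of_pow_two_pow_eq_self hcard hgcd (a := a)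
  exact (kasami_derivative_two_to_one_general k hfix b).imp
    (congrArg ENat.toNat) (congrArg ENat.toNat)
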